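/- If J' ⊆ Q₁ satisfies J' ∉ Φ_θ while {α} ∈ Φ_θ for every α ∈ J', then σ⁻_{J'} ≠ σ⁻_J for every J ∈ Φ_θ. -/

import Mathlib

/-- The quiver is connected: any two vertices are related by the equivalence
relation generated by "there is an arrow between them". -/
def QuiverConnected {Q₀ Q₁ : Type} (src tgt : Q₁ → Q₀) : Prop :=
  ∀ i j : Q₀, Relation.EqvGen (fun i j => ∃ α : Q₁, src α = i ∧ tgt α = j) i j

/-- The indicator vector of a finite subset of the vertices. -/
def indVec {Q₀ : Type} [DecidableEq Q₀] (I' : Finset Q₀) : Q₀ → ℤ :=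
  fun i => if i ∈ I' then 1 else 0

/-- A subset `J ⊆ Q₁` is `θ`-stable if `θ(𝟙_{I'}) > 0` for every nonempty proper
`I' ∈ S(J)`, where `S(J)` consists of the subsets `I' ⊆ Q₀` such that every arrow
`α ∈ J` with source in `I'` has target in `I'`. -/
def StableArrowSet {Q₀ Q₁ : Type} [Fintype Q₀] [DecidableEq Q₀] (src tgt : Q₁ → Q₀)
    (θ : (Q₀ → ℤ) →ₗ[ℤ] ℤ) (J : Finset Q₁) : Prop :=
  ∀ I' : Finset Q₀, (∀ α ∈ J, src α ∈ I' → tgt α ∈ I') →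
    I'.Nonempty → I' ≠ Finset.univ → 0 < θ (indVec I')

/-- `Φ_θ = {J ⊆ Q₁ : Q₁ ∖ J is θ-stable}`. -/
def PhiTheta {Q₀ Q₁ : Type} [Fintype Q₀] [DecidableEq Q₀] [Fintype Q₁] [DecidableEq Q₁]
    (src tgt : Q₁ → Q₀) (θ : (Q₀ → ℤ) →ₗ[ℤ] ℤ) : Set (Finset Q₁) :=
  {J | StableArrowSet src tgt θ Jᶜ}

/-- The linear map `r_* : ℝ^{Q₀} → ℝ^{Q₁}`, `(r_*λ)_α = λ_{tgt α} − λ_{src α}`. -/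
def rMap {Q₀ Q₁ : Type} (src tgt : Q₁ → Q₀) : (Q₀ → ℝ) →ₗ[ℝ] (Q₁ → ℝ) where
  toFun lam := fun α => lam (tgt α) - lam (src α)
  map_add' := by intro x y; funext α; simp; ring
  map_smul' := by intro c x; funext α; simp; ring

/-- `V⁻ = ℝ^{Q₁}/r_*(ℝ^{Q₀})`. -/
abbrev Vminus {Q₀ Q₁ : Type} (src tgt : Q₁ → Q₀) : Type :=
  (Q₁ → ℝ) ⧸ LinearMap.range (rMap src tgt)

/-- The quotient map `s_* : ℝ^{Q₁} → V⁻`. -/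
noncomputable def sMap {Q₀ Q₁ : Type} (src tgt : Q₁ → Q₀) :
    (Q₁ → ℝ) →ₗ[ℝ] Vminus src tgt :=
  (LinearMap.range (rMap src tgt)).mkQ

/-- The standard basis vector `λ_α` of `ℝ^{Q₁}`. -/
noncomputable def lamb {Q₁ : Type} [DecidableEq Q₁] (α : Q₁) : Q₁ → ℝ :=
  Pi.single α 1

/-- The cone `σ⁻_J ⊆ V⁻` spanned by the vectors `s_*λ_α`, `α ∈ J`. -/
noncomputable def coneOf {Q₀ Q₁ : Type} [Fintype Q₁] [DecidableEq Q₁] (src tgt : Q₁ → Q₀)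
    (J : Finset Q₁) : Set (Vminus src tgt) :=
  {x | ∃ a : Q₁ → ℝ, (∀ α, 0 ≤ a α) ∧ x = sMap src tgt (∑ α ∈ J, a α • lamb α)}

/-!
Expressing `s_*λ_α` as a nonnegative combination of the `s_*λ_γ`, `γ ∈ J`, amounts to finding a
potential `m` on the vertices with `r_* m ≤ λ_α`, and equality off `J`. If `α ∉ J`, such an `m`
increases by `1` along `α`, does not increase along any other arrow, and does not decrease along the
arrows outside `J`. So a sublevel set of `m` separating the ends of `α` lies in `S(Q₁ ∖ {α})`, while
its complement lies in `S(Q₁ ∖ J)`. If `{α}` and `J` are in `Φ_θ`, then `θ` is positive on both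
indicator vectors, contradicting `θ(𝟙) ≤ 0`. Hence for `J ∈ Φ_θ` an inclusion `σ⁻_{J'} ⊆ σ⁻_J`
forces `J' ⊆ J`, and `J' ∈ Φ_θ` follows because `Φ_θ` is closed under passing to subsets.
-/

theorem indVec_add_indVec_compl {Q₀ : Type} [Fintype Q₀] [DecidableEq Q₀] (I : Finset Q₀) :
    indVec I + indVec Iᶜ = fun _ => 1 := by
  funext i
  by_cases hi : i ∈ I <;> simp [indVec, hi]

section Stability

variable {Q₀ Q₁ : Type} [Fintype Q₀] [DecidableEq Q₀] {src tgt : Q₁ → Q₀}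
  {θ : (Q₀ → ℤ) →ₗ[ℤ] ℤ} {J K : Finset Q₁}

namespace StableArrowSet

theorem mono (hJK : J ⊆ K) (hJ : StableArrowSet src tgt θ J) : StableArrowSet src tgt θ K :=
  fun I hI => hJ I fun α hα => hI α (hJK hα)

theorem eq_empty_or_eq_univ (hθ : θ (fun _ => 1) ≤ 0) (hJ : StableArrowSet src tgt θ J)
    (hK : StableArrowSet src tgt θ K) {I : Finset Q₀} (hIJ : ∀ α ∈ J, src α ∈ I → tgt α ∈ I)
    (hIK : ∀ α ∈ K, tgt α ∈ I → src α ∈ I) : I = ∅ ∨ I = Finset.univ := by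
  by_contra! ⟨hne, huniv⟩
  have hI : 0 < θ (indVec I) := hJ I hIJ hne huniv
  have hIc : 0 < θ (indVec Iᶜ) := by
    refine hK Iᶜ (fun α hα hs => ?_) ?_ ?_
    · exact Finset.mem_compl.2 fun ht => Finset.mem_compl.1 hs (hIK α hα ht)
    · simpa only [Finset.nonempty_iff_ne_empty, ne_eq, Finset.compl_eq_empty_iff] using huniv
    · simpa only [ne_eq, Finset.compl_eq_univ_iff, Finset.nonempty_iff_ne_empty] using hne
  have hsum : θ (indVec I) + θ (indVec Iᶜ) ≤ 0 := by
    rwa [← map_add, indVec_add_indVec_compl]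
  linarith

theorem eq_of_antitone_of_monotone {R : Type*} [LinearOrder R] (hθ : θ (fun _ => 1) ≤ 0)
    (hJ : StableArrowSet src tgt θ J) (hK : StableArrowSet src tgt θ K) {m : Q₀ → R}
    (hmJ : ∀ α ∈ J, m (tgt α) ≤ m (src α)) (hmK : ∀ α ∈ K, m (src α) ≤ m (tgt α)) (i j : Q₀) :
    m i = m j := by
  suffices hle : ∀ i j, m i ≤ m j from le_antisymm (hle i j) (hle j i)
  intro i j
  let I : Finset Q₀ := {k | m k ≤ m j}
  have mem_I (k : Q₀) : k ∈ I ↔ m k ≤ m j := Finset.mem_filter_univ k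
  have hj : j ∈ I := (mem_I j).2 le_rfl
  obtain hempty | huniv := eq_empty_or_eq_univ hθ hJ hK (I := I)
    (fun α hα hs => (mem_I _).2 ((hmJ α hα).trans ((mem_I _).1 hs)))
    (fun α hα ht => (mem_I _).2 ((hmK α hα).trans ((mem_I _).1 ht)))
  · exact absurd hj (hempty ▸ Finset.notMem_empty j)
  · exact (mem_I i).1 (huniv ▸ Finset.mem_univ i)

end StableArrowSet

theorem isLowerSet_PhiTheta [Fintype Q₁] [DecidableEq Q₁] (src tgt : Q₁ → Q₀)
    (θ : (Q₀ → ℤ) →ₗ[ℤ] ℤ) : IsLowerSet (PhiTheta src tgt θ) :=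
  fun _ _ hJK hK => StableArrowSet.mono (Finset.compl_subset_compl.2 hJK) hK

end Stability

theorem lamb_nonneg {Q₁ : Type} [DecidableEq Q₁] (α : Q₁) : 0 ≤ lamb α :=
  Pi.single_nonneg.2 zero_le_one

theorem sum_smul_lamb_apply {Q₁ : Type} [DecidableEq Q₁] (J : Finset Q₁) (a : Q₁ → ℝ) (γ : Q₁) :
    (∑ α ∈ J, a α • lamb α) γ = if γ ∈ J then a γ else 0 := by
  simp [lamb, Finset.sum_apply, Pi.single_apply]

section Cone

variable {Q₀ Q₁ : Type} [Fintype Q₁] [DecidableEq Q₁] {src tgt : Q₁ → Q₀} {J : Finset Q₁}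

theorem sMap_mem_coneOf_iff {x : Q₁ → ℝ} :
    sMap src tgt x ∈ coneOf src tgt J ↔
      ∃ m : Q₀ → ℝ, rMap src tgt m ≤ x ∧ ∀ γ ∉ J, rMap src tgt m γ = x γ := by
  constructor
  · rintro ⟨a, ha, hx⟩
    obtain ⟨m, hm⟩ := (Submodule.Quotient.eq _).1 hx
    have hm_apply (γ : Q₁) : rMap src tgt m γ = x γ - if γ ∈ J then a γ else 0 := by
      rw [hm, Pi.sub_apply, sum_smul_lamb_apply]
    refine ⟨m, fun γ => ?_, fun γ hγ => by rw [hm_apply, if_neg hγ, sub_zero]⟩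
    rw [hm_apply]
    exact sub_le_self _ (ite_nonneg (ha γ) le_rfl)
  · rintro ⟨m, hle, heq⟩
    refine ⟨x - rMap src tgt m, sub_nonneg.2 hle, (Submodule.Quotient.eq _).2 ⟨m, ?_⟩⟩
    funext γ
    rw [Pi.sub_apply, sum_smul_lamb_apply]
    split_ifs with hγ
    · exact (sub_sub_cancel _ _).symm
    · rw [heq γ hγ, sub_zero]

theorem sMap_lamb_mem_coneOf {α : Q₁} (hα : α ∈ J) :
    sMap src tgt (lamb α) ∈ coneOf src tgt J := by
  refine sMap_mem_coneOf_iff.2 ⟨0, ?_, fun γ hγ => ?_⟩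
  · rw [map_zero]
    exact lamb_nonneg α
  · rw [map_zero, lamb, Pi.single_eq_of_ne (ne_of_mem_of_not_mem hα hγ).symm, Pi.zero_apply]

variable [Fintype Q₀] [DecidableEq Q₀] {θ : (Q₀ → ℤ) →ₗ[ℤ] ℤ}

theorem sMap_lamb_mem_coneOf_iff (hθ : θ (fun _ => 1) ≤ 0) {α : Q₁}
    (hα : {α} ∈ PhiTheta src tgt θ) (hJ : J ∈ PhiTheta src tgt θ) :
    sMap src tgt (lamb α) ∈ coneOf src tgt J ↔ α ∈ J := by
  refine ⟨fun hmem => ?_, sMap_lamb_mem_coneOf⟩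
  by_contra hαJ
  obtain ⟨m, hle, heq⟩ := sMap_mem_coneOf_iff.1 hmem
  have antitone_off_α : ∀ γ ∈ ({α} : Finset Q₁)ᶜ, m (tgt γ) ≤ m (src γ) := by
    intro γ hγ
    have hγα : γ ≠ α := by simpa only [Finset.mem_compl, Finset.mem_singleton] using hγ
    exact sub_nonpos.1 ((hle γ).trans_eq (Pi.single_eq_of_ne hγα 1))
  have monotone_off_J : ∀ γ ∈ Jᶜ, m (src γ) ≤ m (tgt γ) := by
    intro γ hγ
    exact sub_nonneg.1 ((lamb_nonneg α γ).trans_eq (heq γ (Finset.mem_compl.1 hγ)).symm)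
  have hconst : m (tgt α) = m (src α) :=
    StableArrowSet.eq_of_antitone_of_monotone hθ hα hJ antitone_off_α monotone_off_J _ _
  have hstep : m (tgt α) - m (src α) = 1 := (heq α hαJ).trans (Pi.single_eq_same α 1)
  linarith

theorem subset_of_coneOf_subset (hθ : θ (fun _ => 1) ≤ 0) {J' : Finset Q₁}
    (hsingle : ∀ α ∈ J', {α} ∈ PhiTheta src tgt θ) (hJ : J ∈ PhiTheta src tgt θ)
    (hcone : coneOf src tgt J' ⊆ coneOf src tgt J) : J' ⊆ J :=
  fun α hα => (sMap_lamb_mem_coneOf_iff hθ (hsingle α hα) hJ).1 (hcone (sMap_lamb_mem_coneOf hα))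

theorem stmt3_general (hθ : θ (fun _ => 1) ≤ 0) {J' : Finset Q₁}
    (hJ' : J' ∉ PhiTheta src tgt θ) (hsingle : ∀ α ∈ J', {α} ∈ PhiTheta src tgt θ)
    (hJ : J ∈ PhiTheta src tgt θ) : ¬ coneOf src tgt J' ⊆ coneOf src tgt J :=
  fun hcone => hJ' (isLowerSet_PhiTheta src tgt θ (subset_of_coneOf_subset hθ hsingle hJ hcone) hJ)

end Cone

/-- If `J' ∉ Φ_θ` but `{α} ∈ Φ_θ` for every `α ∈ J'`, then
`σ⁻_{J'} ≠ σ⁻_J` for every `J ∈ Φ_θ`. -/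
theorem stmt3 {Q₀ Q₁ : Type} [Fintype Q₀] [DecidableEq Q₀] [Fintype Q₁] [DecidableEq Q₁]
    (src tgt : Q₁ → Q₀) (hconn : QuiverConnected src tgt)
    (θ : (Q₀ → ℤ) →ₗ[ℤ] ℤ) (hθ : θ (fun _ => 1) = 0)
    (J' : Finset Q₁) (hJ' : J' ∉ PhiTheta src tgt θ)
    (hsingle : ∀ α ∈ J', ({α} : Finset Q₁) ∈ PhiTheta src tgt θ) :
    ∀ J ∈ PhiTheta src tgt θ, coneOf src tgt J' ≠ coneOf src tgt J :=
  fun _ hJ heq => stmt3_general hθ.le hJ' hsingle hJ heq.subset
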